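/- arXiv:2004.08001 — 3 statements merged into one kernel-verified Lean document; each statement's English description precedes it below -/
import Mathlib

section
/- Let q be a prime power, let k > 1, and let d_1, …, d_k be positive integers. The number of tuples (x_1, …, x_k) with x_i ∈ F_{q^{d_i}} for each i satisfying x_1 + ⋯ + x_k = 0 equals q^{d_1 + ⋯ + d_k − λ(d_1, …, d_k)}, where λ(d_1, …, d_k) = ∑_{i=1}^k d_i + ∑_{j=2}^k (−1)^{j+1} ∑_{1 ≤ i_1 < ⋯ < i_j ≤ k} gcd(d_{i_1}, …, d_{i_j}). -/
open Polynomial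

/-- `λ(d₁, …, d_k) = ∑ dᵢ + ∑_{j=2}^{k} (-1)^{j+1} ∑_{1 ≤ i₁ < ⋯ < i_j ≤ k} gcd(d_{i₁}, …, d_{i_j})`. -/
def lambdaSum {k : ℕ} (d : Fin k → ℕ) : ℤ :=
  (∑ i, (d i : ℤ)) + ∑ j ∈ Finset.Icc 2 k, (-1 : ℤ) ^ (j + 1) *
    ∑ s ∈ Finset.powersetCard j (Finset.univ : Finset (Fin k)), ((s.gcd d : ℕ) : ℤ)

section Helpers

variable {F M : Type*} [Field F] [AddCommGroup M] [Module F M]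

/-- Kernel of a polynomial in an endomorphism. -/
noncomputable def polyKer (φ : Module.End F M) (f : F[X]) : Submodule F M := LinearMap.ker (aeval φ f)

/-- Submodules which are kernels of nonzero polynomials in `φ`. -/
def GoodSub (φ : Module.End F M) (V : Submodule F M) : Prop := ∃ f : F[X], f ≠ 0 ∧ V = polyKer φ f

lemma mem_polyKer {φ : Module.End F M} {f : F[X]} {x : M} :
    x ∈ polyKer φ f ↔ aeval φ f x = 0 := Iff.rfl

lemma polyKer_mono (φ : Module.End F M) {f g : F[X]} (h : f ∣ g) : polyKer φ f ≤ polyKer φ g := by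
  obtain ⟨c, rfl⟩ := h
  intro x hx
  rw [mem_polyKer] at *
  rw [mul_comm, map_mul, Module.End.mul_apply, hx, map_zero]

lemma polyKer_stable (φ : Module.End F M) {f : F[X]} (e : F[X]) {x : M} (hx : x ∈ polyKer φ f) :
    aeval φ e x ∈ polyKer φ f := by
  rw [mem_polyKer] at *
  rw [← Module.End.mul_apply, ← map_mul, mul_comm, map_mul, Module.End.mul_apply, hx, map_zero]

lemma exists_cofactors (g h : F[X]) (hh : h ≠ 0) :
    ∃ c a b u v α β : F[X], g = c * a ∧ h = c * b ∧ u * a + v * b = 1 ∧ c = α * g + β * h := by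
  classical
  have hc : EuclideanDomain.gcd g h ≠ 0 := fun h0 => hh (EuclideanDomain.gcd_eq_zero_iff.1 h0).2
  obtain ⟨a, ha⟩ := EuclideanDomain.gcd_dvd_left g h
  obtain ⟨b, hb⟩ := EuclideanDomain.gcd_dvd_right g h
  have hg := EuclideanDomain.gcd_eq_gcd_ab g h
  set c := EuclideanDomain.gcd g h
  refine ⟨c, a, b, EuclideanDomain.gcdA g h, EuclideanDomain.gcdB g h,
    EuclideanDomain.gcdA g h, EuclideanDomain.gcdB g h, ha, hb, ?_, ?_⟩
  · apply mul_left_cancel₀ hc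
    linear_combination (-1 : F[X]) * hg - EuclideanDomain.gcdA g h * ha
      - EuclideanDomain.gcdB g h * hb
  · linear_combination hg

lemma GoodSub.inf {φ : Module.End F M} {V W : Submodule F M} (hV : GoodSub φ V)
    (hW : GoodSub φ W) : GoodSub φ (V ⊓ W) := by
  obtain ⟨g, hg0, rfl⟩ := hV
  obtain ⟨h, hh0, rfl⟩ := hW
  obtain ⟨c, a, b, u, v, α, β, hg, hh, huv, hc⟩ := exists_cofactors g h hh0
  refine ⟨c, ?_, le_antisymm ?_ ?_⟩
  · rintro rfl
    simp at hg
    exact hg0 hg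
  · rintro x ⟨hx, hy⟩
    change aeval φ g x = 0 at hx
    change aeval φ h x = 0 at hy
    rw [mem_polyKer, hc]
    simp [hx, hy]
  · exact le_inf (polyKer_mono φ ⟨a, hg⟩) (polyKer_mono φ ⟨b, hh⟩)

lemma GoodSub.sup_aux {φ : Module.End F M} {V W : Submodule F M} (hV : GoodSub φ V)
    (hW : GoodSub φ W) : GoodSub φ (V ⊔ W) ∧
      ∀ x ∈ V ⊔ W, ∃ e : F[X], aeval φ e x ∈ V ∧ x - aeval φ e x ∈ W := by
  obtain ⟨g, hg0, rfl⟩ := hV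
  obtain ⟨h, hh0, rfl⟩ := hW
  obtain ⟨c, a, b, u, v, α, β, hg, hh, huv, hc⟩ := exists_cofactors g h hh0
  have h1 : polyKer φ g ⊔ polyKer φ h ≤ polyKer φ (c * a * b) :=
    sup_le (polyKer_mono φ ⟨b, by rw [hg]⟩) (polyKer_mono φ ⟨a, by rw [hh]; ring⟩)
  have h2 : ∀ x ∈ polyKer φ (c * a * b),
      aeval φ (v * b) x ∈ polyKer φ g ∧ x - aeval φ (v * b) x ∈ polyKer φ h := by
    intro x hx
    have hx' : x - aeval φ (v * b) x = aeval φ (u * a) x := by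
      have : aeval φ (u * a + v * b) x = x := by rw [huv]; simp
      rw [map_add, LinearMap.add_apply] at this
      rw [sub_eq_iff_eq_add, this]
    rw [hx']
    simp only [mem_polyKer, ← Module.End.mul_apply, ← map_mul]
    constructor
    · exact polyKer_mono φ ⟨v, by rw [hg]; ring⟩ hx
    · exact polyKer_mono φ ⟨u, by rw [hh]; ring⟩ hx
  refine ⟨⟨c * a * b, ?_, le_antisymm h1 ?_⟩, fun x hx => ⟨v * b, h2 x (h1 hx)⟩⟩
  · rw [← hg]
    refine mul_ne_zero hg0 ?_
    rintro rfl
    simp at hh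
    exact hh0 hh
  · intro x hx
    obtain ⟨p, r⟩ := h2 x hx
    have := Submodule.add_mem_sup p r
    simpa using this

lemma GoodSub.inf_sup {φ : Module.End F M} {A V W : Submodule F M} (hA : GoodSub φ A)
    (hV : GoodSub φ V) (hW : GoodSub φ W) : A ⊓ (V ⊔ W) = (A ⊓ V) ⊔ (A ⊓ W) := by
  apply le_antisymm _ le_inf_sup
  rintro x ⟨hxA, hx⟩
  obtain ⟨e, h1, h2⟩ := (hV.sup_aux hW).2 x hx
  have hAe : aeval φ e x ∈ A := by
    obtain ⟨f, -, rfl⟩ := hA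
    exact polyKer_stable φ e hxA
  have := Submodule.add_mem_sup (Submodule.mem_inf.2 ⟨hAe, h1⟩)
    (Submodule.mem_inf.2 ⟨A.sub_mem hxA hAe, h2⟩)
  simpa using this

lemma GoodSub.bot (φ : Module.End F M) : GoodSub φ ⊥ := by
  refine ⟨1, one_ne_zero, ?_⟩
  ext x
  simp [mem_polyKer]

lemma GoodSub.finset_sup {φ : Module.End F M} {ι : Type*} (s : Finset ι)
    (V : ι → Submodule F M) (hV : ∀ i, GoodSub φ (V i)) : GoodSub φ (s.sup V) := by
  classical
  induction s using Finset.induction_on with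
  | empty => simpa using GoodSub.bot φ
  | insert a s ha ih => rw [Finset.sup_insert]; exact ((hV a).sup_aux ih).1

lemma GoodSub.inf_finset_sup {φ : Module.End F M} {ι : Type*} (s : Finset ι)
    (V : ι → Submodule F M) (hV : ∀ i, GoodSub φ (V i)) {A : Submodule F M} (hA : GoodSub φ A) :
    A ⊓ s.sup V = s.sup (fun i => A ⊓ V i) := by
  classical
  induction s using Finset.induction_on with
  | empty => simp
  | insert a s ha ih =>
    rw [Finset.sup_insert, Finset.sup_insert, hA.inf_sup (hV a) (finset_sup s V hV), ih]

/-- The inclusion-exclusion term. -/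
noncomputable def ieTerm {ι : Type*} (V : ι → Submodule F M) (t : Finset ι) : ℤ :=
  open Classical in
  if t = ∅ then 0 else (-1) ^ (t.card + 1) * (Module.finrank F (t.inf V : Submodule F M) : ℤ)

lemma finrank_finset_sup {φ : Module.End F M} {ι : Type*} (s : Finset ι) :
    ∀ (V : ι → Submodule F M), (∀ i, GoodSub φ (V i)) → (∀ i, FiniteDimensional F (V i)) →
    (Module.finrank F (s.sup V : Submodule F M) : ℤ) = ∑ t ∈ s.powerset, ieTerm V t := by
  classical
  induction s using Finset.induction_on with
  | empty => intro V _ _; simp [ieTerm]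
  | insert a s ha ih =>
    intro V hV hfin
    have hfs : FiniteDimensional F (s.sup V : Submodule F M) :=
      Submodule.finite_finset_sup s V
    have h1 := Submodule.finrank_sup_add_finrank_inf_eq (V a) (s.sup V)
    rw [GoodSub.inf_finset_sup s V hV (hV a)] at h1
    have h2 := ih (fun i => V a ⊓ V i) (fun i => (hV a).inf (hV i))
      (fun i => Submodule.finiteDimensional_inf_left _ _)
    have h3 := ih V hV hfin
    rw [Finset.sup_insert, Finset.sum_powerset_insert ha]
    have h4 : ∀ t ∈ s.powerset, ieTerm V (insert a t) =
        (if t = ∅ then (Module.finrank F (V a) : ℤ) else 0) - ieTerm (fun i => V a ⊓ V i) t := by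
      intro t ht
      have hat : a ∉ t := fun h => ha (Finset.mem_powerset.1 ht h)
      by_cases h0 : t = ∅
      · subst h0
        have hi : (insert a (∅ : Finset ι)).inf V = V a := by
          rw [Finset.inf_insert, Finset.inf_empty, inf_top_eq]
        rw [ieTerm, ieTerm, if_neg (Finset.insert_ne_empty a _), hi]
        simp
      · have hi : t.inf (fun i => V a ⊓ V i) = (insert a t).inf V := by
          have hii : t.inf (fun i => V a ⊓ V i) = t.inf (fun _ => V a) ⊓ t.inf V := Finset.inf_inf
          rw [Finset.inf_insert, hii, Finset.inf_const (Finset.nonempty_iff_ne_empty.2 h0)]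
        rw [ieTerm, ieTerm, if_neg (Finset.insert_ne_empty a _), if_neg h0, if_neg h0, hi,
          Finset.card_insert_of_notMem hat]
        ring
    rw [Finset.sum_congr rfl h4, Finset.sum_sub_distrib, ← h2, ← h3]
    simp
    zify at h1
    linarith

end Helpers

section Frob

variable (F : Type*) [Field F] [Fintype F]

/-- Frobenius as an `F`-linear endomorphism of the algebraic closure. -/
noncomputable def frobEnd : Module.End F (AlgebraicClosure F) :=
  (FiniteField.frobeniusAlgHom F (AlgebraicClosure F)).toLinearMap

/-- The subfield with `q ^ d` elements as a subspace. -/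
noncomputable def fixSub (d : ℕ) : Submodule F (AlgebraicClosure F) :=
  polyKer (frobEnd F) (X ^ d - 1)

lemma mem_fixSub_iff_periodic {d : ℕ} {x : AlgebraicClosure F} :
    x ∈ fixSub F d ↔ Function.IsPeriodicPt (frobEnd F) d x := by
  rw [fixSub, mem_polyKer]
  simp [sub_eq_zero, Module.End.coe_pow, Function.IsPeriodicPt, Function.IsFixedPt]

lemma mem_fixSub {d : ℕ} {x : AlgebraicClosure F} :
    x ∈ fixSub F d ↔ x ^ (Fintype.card F) ^ d = x := by
  rw [mem_fixSub_iff_periodic]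
  have : (frobEnd F : AlgebraicClosure F → AlgebraicClosure F) = (· ^ Fintype.card F) := rfl
  rw [this, Function.IsPeriodicPt, pow_iterate, Function.IsFixedPt]

lemma fixSub_inf (a b : ℕ) : fixSub F a ⊓ fixSub F b = fixSub F (Nat.gcd a b) := by
  ext x
  simp only [Submodule.mem_inf, mem_fixSub_iff_periodic]
  exact ⟨fun h => h.1.gcd h.2, fun h => ⟨h.trans_dvd (Nat.gcd_dvd_left a b),
    h.trans_dvd (Nat.gcd_dvd_right a b)⟩⟩

lemma fixSub_zero : fixSub F 0 = ⊤ := by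
  ext x
  simp [mem_fixSub]

lemma fixSub_finset_inf {ι : Type*} (t : Finset ι) (d : ι → ℕ) :
    t.inf (fun i => fixSub F (d i)) = fixSub F (t.gcd d) := by
  classical
  induction t using Finset.induction_on with
  | empty => simp [fixSub_zero]
  | insert a s ha ih => rw [Finset.inf_insert, Finset.gcd_insert, ih, fixSub_inf]; rfl

lemma fixSub_good {d : ℕ} (hd : 0 < d) : GoodSub (frobEnd F) (fixSub F d) :=
  ⟨X ^ d - 1, (monic_X_pow_sub_C (1 : F) hd.ne').ne_zero, rfl⟩

lemma natCard_fixSub {d : ℕ} (hd : 0 < d) :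
    Nat.card (fixSub F d) = Fintype.card F ^ d := by
  classical
  have hq : 1 < Fintype.card F := Fintype.one_lt_card
  have hne := FiniteField.X_pow_card_pow_sub_X_ne_zero F hd.ne' hq
  have hsep : (X ^ (Fintype.card F) ^ d - X : F[X]).Separable := by
    obtain ⟨p, hp⟩ := CharP.exists F
    obtain ⟨n, hpp, hn⟩ := FiniteField.card F p
    apply galois_poly_separable p
    rw [hn]
    exact dvd_pow (dvd_pow_self p n.ne_zero) hd.ne'
  have h := (card_rootSet_eq_natDegree_iff_of_splits (K := AlgebraicClosure F) hne
    (IsAlgClosed.splits _)).2 hsep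
  rw [FiniteField.X_pow_card_pow_sub_X_natDegree_eq F hd.ne' hq, ← Nat.card_eq_fintype_card] at h
  rw [← h]
  apply Nat.card_congr
  apply Equiv.subtypeEquivRight
  intro x
  rw [mem_fixSub, mem_rootSet]
  simp [hne, sub_eq_zero]

lemma finite_fixSub {d : ℕ} (hd : 0 < d) : FiniteDimensional F (fixSub F d) := by
  have : Finite (fixSub F d) := by
    apply Nat.finite_of_card_ne_zero
    rw [natCard_fixSub F hd]
    exact pow_ne_zero _ Fintype.card_ne_zero
  exact Module.Finite.of_finite

lemma finrank_fixSub {d : ℕ} (hd : 0 < d) : Module.finrank F (fixSub F d) = d := by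
  have := finite_fixSub F hd
  have h := Module.natCard_eq_pow_finrank (K := F) (V := fixSub F d)
  rw [natCard_fixSub F hd, Nat.card_eq_fintype_card] at h
  exact (Nat.pow_right_injective (Fintype.one_lt_card (α := F)) h).symm

lemma lambdaSum_eq {k : ℕ} (hk : 1 < k) (d : Fin k → ℕ) (hd : ∀ i, 0 < d i) :
    lambdaSum d = Module.finrank F
      (Finset.univ.sup (fun i => fixSub F (d i)) : Submodule F (AlgebraicClosure F)) := by
  rw [finrank_finset_sup (φ := frobEnd F) _ _ (fun i => fixSub_good F (hd i))
    (fun i => finite_fixSub F (hd i)), Finset.sum_powerset]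
  have key : ∀ j, 0 < j → ∑ t ∈ Finset.powersetCard j (Finset.univ : Finset (Fin k)),
      ieTerm (fun i => fixSub F (d i)) t = (-1 : ℤ) ^ (j + 1) *
      ∑ s ∈ Finset.powersetCard j (Finset.univ : Finset (Fin k)), ((s.gcd d : ℕ) : ℤ) := by
    intro j hj
    rw [Finset.mul_sum]
    refine Finset.sum_congr rfl fun t ht => ?_
    have htc := (Finset.mem_powersetCard.1 ht).2
    have hne : t.Nonempty := Finset.card_pos.1 (htc ▸ hj)
    have hg : 0 < t.gcd d := by
      obtain ⟨i, hi⟩ := hne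
      exact Nat.pos_of_dvd_of_pos (Finset.gcd_dvd hi) (hd i)
    rw [ieTerm, if_neg hne.ne_empty, htc, fixSub_finset_inf, finrank_fixSub F hg]
  have hr : Finset.range ((Finset.univ : Finset (Fin k)).card + 1)
      = insert 0 (insert 1 (Finset.Icc 2 k)) := by
    ext j
    simp
    omega
  rw [hr, Finset.sum_insert (by simp), Finset.sum_insert (by simp), key 1 one_pos,
    Finset.sum_congr rfl fun j hj => key j (by have := (Finset.mem_Icc.1 hj).1; omega)]
  simp [lambdaSum, ieTerm, Finset.powersetCard_one]

lemma count_aux {k : ℕ} (V : Fin k → Submodule F (AlgebraicClosure F))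
    (hfin : ∀ i, FiniteDimensional F (V i)) :
    ∃ n : ℕ, Nat.card {x : Fin k → AlgebraicClosure F // (∀ i, x i ∈ V i) ∧ ∑ i, x i = 0}
      = Fintype.card F ^ n ∧
      Module.finrank F (Finset.univ.sup V : Submodule F (AlgebraicClosure F)) + n
        = ∑ i, Module.finrank F (V i) := by
  classical
  let S : ((i : Fin k) → V i) →ₗ[F] AlgebraicClosure F :=
    ∑ i, (V i).subtype ∘ₗ LinearMap.proj i
  have hS : ∀ x, S x = ∑ i, (x i : AlgebraicClosure F) := by
    intro x; simp [S]
  have hrange : LinearMap.range S = Finset.univ.sup V := by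
    ext x
    rw [Finset.sup_eq_iSup, Submodule.mem_iSup_finset_iff_exists_sum, LinearMap.mem_range]
    simp only [hS]
  refine ⟨Module.finrank F (LinearMap.ker S), ?_, ?_⟩
  · rw [← Nat.card_eq_fintype_card, ← Module.natCard_eq_pow_finrank (K := F) (V := LinearMap.ker S)]
    apply Nat.card_congr
    exact
      { toFun := fun x => ⟨fun i => ⟨x.1 i, x.2.1 i⟩, by
          rw [LinearMap.mem_ker, hS]; exact x.2.2⟩
        invFun := fun y => ⟨fun i => (y.1 i : AlgebraicClosure F), fun i => (y.1 i).2, by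
          rw [← hS]; exact y.2⟩
        left_inv := fun x => rfl
        right_inv := fun y => rfl }
  · rw [← hrange, LinearMap.finrank_range_add_finrank_ker, Module.finrank_pi_fintype]

end Frob

/-- **Corollary 2 (counting part).** For `k > 1` and positive integers `d₁, …, d_k`, the number
of tuples `(x₁, …, x_k)` with `xᵢ ∈ F_{q^{dᵢ}}` and `x₁ + ⋯ + x_k = 0` equals
`q^(d₁ + ⋯ + d_k - λ(d₁, …, d_k))`. -/
theorem zero_sum_count
    (F : Type*) [Field F] [Fintype F]
    (q : ℕ) (hq : q = Fintype.card F)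
    {k : ℕ} (hk : 1 < k)
    (d : Fin k → ℕ) (hd : ∀ i, 0 < d i) :
    (Nat.card {x : Fin k → AlgebraicClosure F //
        (∀ i, x i ^ q ^ (d i) = x i) ∧ ∑ i, x i = 0} : ℚ) =
      (q : ℚ) ^ ((∑ i, (d i : ℤ)) - lambdaSum d) := by
  subst hq
  obtain ⟨n, h1, h2⟩ := count_aux F (fun i => fixSub F (d i)) (fun i => finite_fixSub F (hd i))
  simp only [mem_fixSub] at h1
  rw [h1, lambdaSum_eq F hk d hd]
  have h3 : ∑ i, Module.finrank F (fixSub F (d i)) = ∑ i, d i :=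
    Finset.sum_congr rfl fun i _ => finrank_fixSub F (hd i)
  rw [h3] at h2
  have h4 : (∑ i, (d i : ℤ)) - (Module.finrank F (Finset.univ.sup (fun i => fixSub F (d i)) :
      Submodule F (AlgebraicClosure F)) : ℤ) = (n : ℤ) := by
    have h5 : ((∑ i, d i : ℕ) : ℤ) = ∑ i, (d i : ℤ) := by push_cast; rfl
    rw [← h5, ← h2]
    push_cast
    ring
  rw [h4, zpow_natCast]
  push_cast
  rfl
end

section
/- Let q be a prime power, let k > 1, and let d_1, …, d_k be positive integers. The sumset F_{q^{d_1}} + ⋯ + F_{q^{d_k}} = {α_1 + ⋯ + α_k : α_i ∈ F_{q^{d_i}}}, taken inside the algebraic closure of F_q, contains exactly q^{λ(d_1, …, d_k)} elements, where λ(d_1, …, d_k) = ∑_{i=1}^k d_i + ∑_{j=2}^k (−1)^{j+1} ∑_{1 ≤ i_1 < ⋯ < i_j ≤ k} gcd(d_{i_1}, …, d_{i_j}). -/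
open Polynomial

namespace SumSub

section Dist
variable {F M : Type*} [Field F] [AddCommGroup M] [Module F M] (φ : Module.End F M)

/-- Kernel of the polynomial `f` evaluated at `φ`. -/
noncomputable def V (f : F[X]) : Submodule F M := LinearMap.ker (aeval φ f)

lemma mem_V {f : F[X]} {x : M} : x ∈ V φ f ↔ aeval φ f x = 0 := Iff.rfl

lemma V_mul_left {f g : F[X]} {x : M} (h : x ∈ V φ f) : x ∈ V φ (g * f) := by
  rw [mem_V] at *
  rw [map_mul, Module.End.mul_apply, h, map_zero]

lemma V_mono {f g : F[X]} (h : f ∣ g) : V φ f ≤ V φ g := by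
  obtain ⟨c, rfl⟩ := h
  intro x hx
  rw [mul_comm]
  exact V_mul_left φ hx

lemma V_apply {f g : F[X]} {x : M} (h : x ∈ V φ (f * g)) : aeval φ g x ∈ V φ f := by
  rw [mem_V] at *
  rwa [map_mul, Module.End.mul_apply] at h

lemma exists_sup (g h : F[X]) (hg : g ≠ 0) (hh : h ≠ 0) :
    ∃ l : F[X], l ≠ 0 ∧ V φ g ⊔ V φ h = V φ l ∧
      ∀ f : F[X], V φ f ⊓ V φ l ≤ (V φ f ⊓ V φ g) ⊔ (V φ f ⊓ V φ h) := by
  classical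
  obtain ⟨g', hg'⟩ := EuclideanDomain.gcd_dvd_left g h
  obtain ⟨h', hh'⟩ := EuclideanDomain.gcd_dvd_right g h
  have hb := EuclideanDomain.gcd_eq_gcd_ab g h
  set e := EuclideanDomain.gcd g h
  set u := EuclideanDomain.gcdA g h
  set v := EuclideanDomain.gcdB g h
  have he : e ≠ 0 := by rintro h0; rw [h0, zero_mul] at hg'; exact hg hg'
  have hg0 : g' ≠ 0 := by rintro rfl; rw [mul_zero] at hg'; exact hg hg'
  have hh0 : h' ≠ 0 := by rintro rfl; rw [mul_zero] at hh'; exact hh hh'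
  have h1 : u * g' + v * h' = 1 := by
    apply mul_left_cancel₀ he
    linear_combination -hb - u * hg' - v * hh'
  have key : ∀ f : F[X], V φ f ⊓ V φ (e * g' * h') ≤ (V φ f ⊓ V φ g) ⊔ (V φ f ⊓ V φ h) := by
    rintro f x ⟨hxf, hxl⟩
    have hx : x = aeval φ (v * h') x + aeval φ (u * g') x := by
      rw [← LinearMap.add_apply, ← map_add, add_comm, h1, map_one, Module.End.one_apply]
    rw [hx]
    refine Submodule.add_mem_sup ⟨V_apply φ ?_, V_apply φ ?_⟩ ⟨V_apply φ ?_, V_apply φ ?_⟩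
    · rw [mul_comm]; exact V_mul_left φ hxf
    · have : g * (v * h') = v * (e * g' * h') := by rw [hg']; ring
      rw [this]; exact V_mul_left φ hxl
    · rw [mul_comm]; exact V_mul_left φ hxf
    · have : h * (u * g') = u * (e * g' * h') := by rw [hh']; ring
      rw [this]; exact V_mul_left φ hxl
  refine ⟨e * g' * h', mul_ne_zero (mul_ne_zero he hg0) hh0, le_antisymm ?_ ?_, key⟩
  · refine sup_le (V_mono φ ⟨h', by rw [hg']⟩) (V_mono φ ⟨g', by rw [hh']; ring⟩)
  · have := key 0
    have h0 : V φ (0 : F[X]) = ⊤ := by simp [V]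
    simpa [h0] using this

lemma exists_iSup {ι : Type*} (s : Finset ι) (g : ι → F[X]) (hg : ∀ i, g i ≠ 0) :
    ∃ l : F[X], l ≠ 0 ∧ (s.sup fun i => V φ (g i)) = V φ l ∧
      ∀ f : F[X], V φ f ⊓ V φ l = s.sup fun i => V φ f ⊓ V φ (g i) := by
  classical
  induction s using Finset.induction_on with
  | empty =>
    have h0 : V φ (1 : F[X]) = ⊥ := by
      rw [V, map_one]; exact LinearMap.ker_id
    exact ⟨1, one_ne_zero, by simp [h0], by simp [h0]⟩
  | insert a s ha ih =>
    obtain ⟨l, hl, h1, h2⟩ := ih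
    obtain ⟨m, hm, h3, h4⟩ := exists_sup φ (g a) l (hg a) hl
    refine ⟨m, hm, by rw [Finset.sup_insert, h1, h3], fun f => ?_⟩
    rw [Finset.sup_insert, ← h2]
    refine le_antisymm (h4 f) ?_
    rw [← h3]
    exact sup_le (inf_le_inf_left _ le_sup_left) (inf_le_inf_left _ le_sup_right)

end Dist

lemma alt_sum_insert {ι : Type*} [DecidableEq ι] (s : Finset ι) (a : ι) (ha : a ∉ s) (d : ι → ℕ) :
    ∑ t ∈ (insert a s).powerset, (-1 : ℤ) ^ (t.card + 1) * ((t.gcd d : ℕ) : ℤ) =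
    d a + ∑ t ∈ s.powerset, (-1 : ℤ) ^ (t.card + 1) * ((t.gcd d : ℕ) : ℤ) -
     ∑ t ∈ s.powerset, (-1 : ℤ) ^ (t.card + 1) * ((t.gcd (fun i => (d a).gcd (d i)) : ℕ) : ℤ) := by
  rw [Finset.sum_powerset_insert ha]
  have : ∑ t ∈ s.powerset, (-1 : ℤ) ^ ((insert a t).card + 1) * (((insert a t).gcd d : ℕ) : ℤ) +
      ∑ t ∈ s.powerset, (-1 : ℤ) ^ (t.card + 1) * ((t.gcd (fun i => (d a).gcd (d i)) : ℕ) : ℤ)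
      = d a := by
    rw [← Finset.sum_add_distrib, Finset.sum_eq_single ∅]
    · simp
    · intro t ht hne
      have hat : a ∉ t := fun h => ha (Finset.mem_powerset.1 ht h)
      have : t.gcd (fun i => (d a).gcd (d i)) = (insert a t).gcd d := by
        apply Nat.dvd_antisymm
        · apply Finset.dvd_gcd
          intro b hb
          obtain ⟨c, hc⟩ := Finset.nonempty_iff_ne_empty.2 hne
          rcases Finset.mem_insert.1 hb with rfl | hb
          · exact (Finset.gcd_dvd hc).trans (Nat.gcd_dvd_left _ _)
          · exact (Finset.gcd_dvd hb).trans (Nat.gcd_dvd_right _ _)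
        · apply Finset.dvd_gcd
          intro b hb
          exact Nat.dvd_gcd (Finset.gcd_dvd (Finset.mem_insert_self _ _))
            (Finset.gcd_dvd (Finset.mem_insert_of_mem hb))
      rw [this, Finset.card_insert_of_notMem hat]
      ring
    · simp
  linarith

lemma lambdaSum_eq {k : ℕ} (hk : 1 < k) (d : Fin k → ℕ) : lambdaSum d =
    ∑ t ∈ (Finset.univ : Finset (Fin k)).powerset,
      (-1 : ℤ) ^ (t.card + 1) * ((t.gcd d : ℕ) : ℤ) := by
  rw [Finset.sum_powerset, lambdaSum]
  have h : ∀ j, ∑ t ∈ Finset.powersetCard j (Finset.univ : Finset (Fin k)),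
      (-1 : ℤ) ^ (t.card + 1) * ((t.gcd d : ℕ) : ℤ) = (-1 : ℤ) ^ (j + 1) *
      ∑ t ∈ Finset.powersetCard j (Finset.univ : Finset (Fin k)), ((t.gcd d : ℕ) : ℤ) := by
    intro j
    rw [Finset.mul_sum]
    refine Finset.sum_congr rfl fun t ht => ?_
    rw [(Finset.mem_powersetCard.1 ht).2]
  simp only [h]
  rw [Finset.card_univ, Fintype.card_fin, Finset.range_eq_Ico,
    Finset.sum_eq_sum_Ico_succ_bot (by omega), Finset.sum_eq_sum_Ico_succ_bot (by omega)]
  have : Finset.Ico (0 + 1 + 1) (k + 1) = Finset.Icc 2 k := by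
    ext; simp
  rw [this]
  simp [Finset.powersetCard_one]

section Frob
variable (F : Type*) [Field F] [Fintype F]

/-- The Frobenius as a linear map. -/
noncomputable def fr : Module.End F (AlgebraicClosure F) :=
  (FiniteField.frobeniusAlgHom F (AlgebraicClosure F)).toLinearMap

lemma fr_pow_apply (n : ℕ) (x : AlgebraicClosure F) :
    (fr F ^ n) x = x ^ (Fintype.card F) ^ n := by
  rw [Module.End.pow_apply]
  have : (⇑(fr F) : AlgebraicClosure F → AlgebraicClosure F) = (· ^ Fintype.card F) := rfl
  rw [this, pow_iterate]

/-- The subfield with `q ^ n` elements, as a subspace. -/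
noncomputable def W (n : ℕ) : Submodule F (AlgebraicClosure F) := V (fr F) (X ^ n - 1)

lemma mem_W {n : ℕ} {x : AlgebraicClosure F} : x ∈ W F n ↔ x ^ (Fintype.card F) ^ n = x := by
  rw [W, mem_V, map_sub, map_pow, aeval_X, map_one, LinearMap.sub_apply, fr_pow_apply,
    Module.End.one_apply, sub_eq_zero]

lemma W_inf (m n : ℕ) : W F m ⊓ W F n = W F (m.gcd n) := by
  have hW : ∀ n x, x ∈ W F n ↔ Function.IsPeriodicPt (fr F) n x := by
    intro n x
    rw [mem_W, ← fr_pow_apply, Module.End.pow_apply]; rfl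
  ext x
  simp only [Submodule.mem_inf, hW]
  constructor
  · rintro ⟨h1, h2⟩; exact h1.gcd h2
  · intro h
    exact ⟨h.trans_dvd (Nat.gcd_dvd_left _ _), h.trans_dvd (Nat.gcd_dvd_right _ _)⟩

lemma card_W (n : ℕ) (hn : 0 < n) : Nat.card (W F n) = (Fintype.card F) ^ n := by
  classical
  have hq : 1 < Fintype.card F ^ n := Nat.one_lt_pow hn.ne' Fintype.one_lt_card
  have hsep : (X ^ (Fintype.card F ^ n) - X : (AlgebraicClosure F)[X]).Separable := by
    have : ((Fintype.card F : ℕ) : AlgebraicClosure F) = 0 := by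
      rw [← map_natCast (algebraMap F (AlgebraicClosure F)), FiniteField.cast_card_eq_zero, map_zero]
    rw [Polynomial.separable_def]
    have h2 : derivative (X ^ (Fintype.card F ^ n) - X : (AlgebraicClosure F)[X]) = -1 := by
      rw [derivative_sub, derivative_X_pow, derivative_X, Nat.cast_pow, this, zero_pow hn.ne']
      simp
    rw [h2]
    exact isCoprime_one_right.neg_right
  have hne : (X ^ (Fintype.card F ^ n) - X : (AlgebraicClosure F)[X]) ≠ 0 :=
    FiniteField.X_pow_card_sub_X_ne_zero _ hq
  have h := card_rootSet_eq_natDegree (K := AlgebraicClosure F) hsep (IsAlgClosed.splits _)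
  rw [FiniteField.X_pow_card_sub_X_natDegree_eq _ hq] at h
  rw [← h, ← Nat.card_eq_fintype_card]
  refine Nat.card_congr (Equiv.subtypeEquivRight fun x => ?_)
  rw [mem_W, mem_rootSet_of_ne hne]
  simp [sub_eq_zero]

lemma finite_W (n : ℕ) (hn : 0 < n) : FiniteDimensional F (W F n) := by
  have : Finite (W F n) := Nat.finite_of_card_ne_zero (by
    rw [card_W F n hn]; exact pow_ne_zero _ Fintype.card_ne_zero)
  exact Module.Finite.of_finite

lemma finrank_W (n : ℕ) (hn : 0 < n) : Module.finrank F (W F n) = n := by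
  have := finite_W F n hn
  have h := Module.natCard_eq_pow_finrank (K := F) (V := W F n)
  rw [card_W F n hn, Nat.card_eq_fintype_card] at h
  exact (Nat.pow_right_injective (Fintype.one_lt_card (α := F)) h).symm

lemma finrank_sup {ι : Type*} (s : Finset ι) : ∀ d : ι → ℕ, (∀ i, 0 < d i) →
    FiniteDimensional F (s.sup fun i => W F (d i) : Submodule F (AlgebraicClosure F)) ∧
    (Module.finrank F (s.sup fun i => W F (d i) : Submodule F (AlgebraicClosure F)) : ℤ) =
    ∑ t ∈ s.powerset, (-1 : ℤ) ^ (t.card + 1) * ((t.gcd d : ℕ) : ℤ) := by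
  classical
  induction s using Finset.induction_on with
  | empty => 
    intro d hd
    rw [Finset.sup_empty]
    exact ⟨inferInstance, by simp⟩
  | insert a s ha ih =>
    intro d hd
    obtain ⟨f1, e1⟩ := ih d hd
    obtain ⟨f2, e2⟩ := ih (fun i => (d a).gcd (d i)) (fun i => Nat.gcd_pos_of_pos_left _ (hd a))
    have f3 := finite_W F (d a) (hd a)
    rw [alt_sum_insert s a ha, ← e1, ← e2, Finset.sup_insert]
    refine ⟨inferInstance, ?_⟩
    obtain ⟨l, -, h1, h2⟩ := exists_iSup (fr F) s (fun i => X ^ d i - 1)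
      (fun i => (monic_X_pow_sub_C 1 (hd i).ne').ne_zero)
    have h3 : W F (d a) ⊓ (s.sup fun i => W F (d i)) = s.sup fun i => W F ((d a).gcd (d i)) := by
      simp only [← W_inf]
      exact (congrArg _ h1).trans (h2 _)
    have h4 := Submodule.finrank_sup_add_finrank_inf_eq (W F (d a)) (s.sup fun i => W F (d i))
    rw [h3, finrank_W F _ (hd a)] at h4
    have h5 : ((_ : ℕ) : ℤ) = _ := congrArg Nat.cast h4
    push_cast at h5
    linarith

end Frob
end SumSub

/-- **Corollary 2 (sumset part).** For `k > 1` and positive integers `d₁, …, d_k`, the sumset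
`F_{q^{d₁}} + ⋯ + F_{q^{d_k}}`, taken inside the algebraic closure of `F_q`, contains exactly
`q^{λ(d₁, …, d_k)}` elements. -/
theorem card_sumset_subfields
    (F : Type*) [Field F] [Fintype F]
    (q : ℕ) (hq : q = Fintype.card F)
    {k : ℕ} (hk : 1 < k)
    (d : Fin k → ℕ) (hd : ∀ i, 0 < d i) :
    (Nat.card {x : AlgebraicClosure F //
        ∃ a : Fin k → AlgebraicClosure F,
          (∀ i, a i ^ q ^ (d i) = a i) ∧ x = ∑ i, a i} : ℚ) =
      (q : ℚ) ^ lambdaSum d := by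
  subst hq
  have hs : ∀ x : AlgebraicClosure F, (∃ a : Fin k → AlgebraicClosure F,
      (∀ i, a i ^ (Fintype.card F) ^ (d i) = a i) ∧ x = ∑ i, a i) ↔
      x ∈ (Finset.univ.sup fun i => SumSub.W F (d i) : Submodule F (AlgebraicClosure F)) := by
    intro x
    rw [Finset.sup_univ_eq_iSup, Submodule.mem_iSup_iff_exists_finsupp]
    constructor
    · rintro ⟨a, h1, rfl⟩
      refine ⟨Finsupp.equivFunOnFinite.symm a, fun i => (SumSub.mem_W F).2 (h1 i), ?_⟩
      rw [Finsupp.sum_fintype _ _ (fun _ => rfl)]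
      rfl
    · rintro ⟨a, h1, rfl⟩
      refine ⟨a, fun i => (SumSub.mem_W F).1 (h1 i), ?_⟩
      rw [Finsupp.sum_fintype _ _ (fun _ => rfl)]
  obtain ⟨f, e⟩ := SumSub.finrank_sup F (Finset.univ : Finset (Fin k)) d hd
  rw [Nat.card_congr (Equiv.subtypeEquivRight hs), SumSub.lambdaSum_eq hk, ← e, zpow_natCast]
  have h := Module.natCard_eq_pow_finrank (K := F)
    (V := (Finset.univ.sup fun i => SumSub.W F (d i) : Submodule F (AlgebraicClosure F)))
  rw [Nat.card_eq_fintype_card (α := F)] at h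
  exact_mod_cast h
end

section
/- Let q be a prime power and let d_1, …, d_k be positive integers. Then the degree of lcm(x^{d_1} − 1, …, x^{d_k} − 1) in F_q[x] equals λ(d_1, …, d_k) = ∑_{i=1}^k d_i + ∑_{j=2}^k (−1)^{j+1} ∑_{1 ≤ i_1 < ⋯ < i_j ≤ k} gcd(d_{i_1}, …, d_{i_j}). -/
open Polynomial

theorem aux_dvd_lcm {M : Type*} [CommMonoidWithZero M] [GCDMonoid M] (x b c : M)
    (hb : b ≠ 0) (h : x ∣ lcm b c) : x ∣ lcm (gcd x b) (gcd x c) := by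
  have hg : gcd (gcd x b) (gcd x c) ≠ 0 := by
    intro h0
    rw [gcd_eq_zero_iff, gcd_eq_zero_iff] at h0
    exact hb h0.1.2
  have h1 : gcd (gcd x b) (gcd x c) ∣ gcd x b := gcd_dvd_left _ _
  have h2 : gcd (gcd x b) (gcd x c) ∣ gcd x c := gcd_dvd_right _ _
  have hx : gcd (gcd x b) (gcd x c) ∣ x := h1.trans (gcd_dvd_left _ _)
  have hbb : gcd (gcd x b) (gcd x c) ∣ b := h1.trans (gcd_dvd_right _ _)
  have hcc : gcd (gcd x b) (gcd x c) ∣ c := h2.trans (gcd_dvd_right _ _)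
  rw [← mul_dvd_mul_iff_left hg]
  refine Dvd.dvd.trans ?_ (gcd_mul_lcm (gcd x b) (gcd x c)).symm.dvd
  refine Dvd.dvd.trans ?_ (gcd_mul_right' (gcd x c) x b).dvd
  refine dvd_gcd ?_ ?_
  · rw [mul_comm]; exact mul_dvd_mul_left _ h2
  · refine Dvd.dvd.trans ?_ (gcd_mul_left' b x c).dvd
    refine dvd_gcd (mul_dvd_mul hbb dvd_rfl) ?_
    exact (mul_dvd_mul (dvd_gcd hbb hcc) h).trans (gcd_mul_lcm b c).dvd

theorem aux_gcd_lcm {M : Type*} [CommMonoidWithZero M] [GCDMonoid M] (a b c : M)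
    (hb : b ≠ 0) : Associated (gcd a (lcm b c)) (lcm (gcd a b) (gcd a c)) := by
  refine associated_of_dvd_dvd ?_ ?_
  · refine (aux_dvd_lcm _ b c hb (gcd_dvd_right a (lcm b c))).trans ?_
    exact lcm_dvd_lcm (gcd_dvd_gcd (gcd_dvd_left _ _) dvd_rfl)
      (gcd_dvd_gcd (gcd_dvd_left _ _) dvd_rfl)
  · exact lcm_dvd (gcd_dvd_gcd dvd_rfl (dvd_lcm_left _ _))
      (gcd_dvd_gcd dvd_rfl (dvd_lcm_right _ _))

theorem aux_gcd_finset_lcm {M ι : Type*} [CommMonoidWithZero M] [Nontrivial M]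
    [NormalizedGCDMonoid M] [DecidableEq ι] (a : M) (f : ι → M) (hf : ∀ i, f i ≠ 0)
    (s : Finset ι) :
    Associated (gcd a (s.lcm f)) (s.lcm fun i => gcd a (f i)) := by
  induction s using Finset.induction_on with
  | empty => simp
  | insert i s his ih =>
    rw [Finset.lcm_insert, Finset.lcm_insert]
    refine (aux_gcd_lcm a _ _ (hf i)).trans ?_
    exact associated_of_dvd_dvd (lcm_dvd_lcm dvd_rfl ih.dvd) (lcm_dvd_lcm dvd_rfl ih.symm.dvd)

theorem aux_natDegree {F : Type*} [Field F] {p r : F[X]} (h : Associated p r) :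
    p.natDegree = r.natDegree :=
  natDegree_eq_of_degree_eq (degree_eq_degree_of_associated h)

theorem aux_incl_excl {F ι : Type*} [Field F] [NormalizedGCDMonoid F[X]] [DecidableEq ι]
    (s : Finset ι) : ∀ (f : ι → F[X]), (∀ i, f i ≠ 0) →
    ((s.lcm f).natDegree : ℤ) =
      ∑ t ∈ s.powerset, (-1 : ℤ) ^ (t.card + 1) * ((t.gcd f).natDegree : ℤ) := by
  induction s using Finset.induction_on with
  | empty => intro f hf; simp
  | insert a s ha ih =>
    intro f hf
    have hl : s.lcm f ≠ 0 := by
      rw [Ne, Finset.lcm_eq_zero_iff]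
      rintro ⟨i, -, hi⟩
      exact hf i hi
    have hl' : lcm (f a) (s.lcm f) ≠ 0 := by
      rw [Ne, lcm_eq_zero_iff]
      exact not_or.2 ⟨hf a, hl⟩
    have hg : gcd (f a) (s.lcm f) ≠ 0 := by
      rw [Ne, gcd_eq_zero_iff]
      exact fun h => hf a h.1
    have h1 := aux_natDegree (gcd_mul_lcm (f a) (s.lcm f))
    rw [natDegree_mul hg hl', natDegree_mul (hf a) hl,
      aux_natDegree (aux_gcd_finset_lcm (f a) f hf s)] at h1
    have h2 := ih (fun i => gcd (f a) (f i)) (fun i => by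
      rw [Ne, gcd_eq_zero_iff]
      exact fun h => hf a h.1)
    have h3 := ih f hf
    rw [Finset.sum_powerset_insert ha, Finset.lcm_insert]
    have h4 : ∀ t ∈ s.powerset,
        (-1 : ℤ) ^ ((insert a t).card + 1) * (((insert a t).gcd f).natDegree : ℤ) =
        (if t = ∅ then ((f a).natDegree : ℤ) else 0) -
        (-1 : ℤ) ^ (t.card + 1) * ((t.gcd fun i => gcd (f a) (f i)).natDegree : ℤ) := by
      intro t ht
      have hat : a ∉ t := fun h => ha (Finset.mem_powerset.1 ht h)
      rw [Finset.card_insert_of_notMem hat, Finset.gcd_insert]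
      by_cases h0 : t = ∅
      · subst h0
        have : (normalize (f a)).natDegree = (f a).natDegree := by
          exact aux_natDegree (normalize_associated _)
        simp [this]
      · obtain ⟨j, hj⟩ := Finset.nonempty_iff_ne_empty.2 h0
        have : Associated (gcd (f a) (t.gcd f)) (t.gcd fun i => gcd (f a) (f i)) := by
          refine associated_of_dvd_dvd ?_ ?_
          · exact Finset.dvd_gcd fun i hi => gcd_dvd_gcd dvd_rfl (Finset.gcd_dvd hi)
          · exact dvd_gcd ((Finset.gcd_dvd hj).trans (gcd_dvd_left _ _))
              (Finset.dvd_gcd fun i hi => (Finset.gcd_dvd hi).trans (gcd_dvd_right _ _))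
        rw [aux_natDegree this, if_neg h0]
        ring
    rw [Finset.sum_congr rfl h4, Finset.sum_sub_distrib, ← h2, ← h3]
    simp only [Finset.sum_ite_eq', Finset.empty_mem_powerset, if_true]
    have h5 : ((s.lcm fun i => gcd (f a) (f i)).natDegree : ℤ) +
      ((lcm (f a) (s.lcm f)).natDegree : ℤ) = (f a).natDegree + (s.lcm f).natDegree := by
      exact_mod_cast h1
    linarith

theorem aux_dvd_iff {F : Type*} [Field F] (h : F[X]) (n : ℕ) :
    h ∣ X ^ n - 1 ↔ orderOf (Ideal.Quotient.mk (Ideal.span {h}) X) ∣ n := by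
  rw [orderOf_dvd_iff_pow_eq_one, ← Ideal.mem_span_singleton, ← map_pow,
    ← map_one (Ideal.Quotient.mk (Ideal.span {h})), Ideal.Quotient.eq]

theorem aux_gcd_degree {F ι : Type*} [Field F] [NormalizedGCDMonoid F[X]]
    (t : Finset ι) (d : ι → ℕ) :
    (t.gcd fun i => (X : F[X]) ^ d i - 1).natDegree = t.gcd d := by
  have : Associated (t.gcd fun i => (X : F[X]) ^ d i - 1) (X ^ (t.gcd d) - 1) := by
    refine associated_of_dvd_dvd ?_ ?_
    · rw [aux_dvd_iff, Finset.dvd_gcd_iff]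
      intro i hi
      rw [← aux_dvd_iff]
      exact Finset.gcd_dvd hi
    · refine Finset.dvd_gcd fun i hi => ?_
      rw [aux_dvd_iff]
      exact ((aux_dvd_iff _ _).1 dvd_rfl).trans (Finset.gcd_dvd hi)
  rw [aux_natDegree this]
  have h := natDegree_X_pow_sub_C (R := F) (n := t.gcd d) (r := 1)
  rwa [C_1] at h

/-- For positive integers `d₁, …, d_k`, the degree of `lcm(x^{d₁} - 1, …, x^{d_k} - 1)` in
`F_q[x]` equals `λ(d₁, …, d_k)`. -/
theorem degree_lcm_eq_lambda
    (F : Type*) [Field F] [Fintype F] [DecidableEq F]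
    {k : ℕ} (d : Fin k → ℕ) (hd : ∀ i, 0 < d i) :
    ((Finset.univ.lcm fun i : Fin k => (X : Polynomial F) ^ (d i) - 1).natDegree : ℤ) =
      lambdaSum d := by
  have hne : ∀ i, (X : F[X]) ^ d i - 1 ≠ 0 := fun i => by
    have := X_pow_sub_C_ne_zero (hd i) (1 : F)
    rwa [C_1] at this
  rw [aux_incl_excl _ _ hne]
  simp only [aux_gcd_degree]
  rw [Finset.sum_powerset, Finset.card_univ, Fintype.card_fin]
  have key : ∀ j, ∑ t ∈ Finset.powersetCard j (Finset.univ : Finset (Fin k)),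
      (-1 : ℤ) ^ (t.card + 1) * ((t.gcd d : ℕ) : ℤ) = (-1 : ℤ) ^ (j + 1) *
      ∑ t ∈ Finset.powersetCard j (Finset.univ : Finset (Fin k)), ((t.gcd d : ℕ) : ℤ) := by
    intro j
    rw [Finset.mul_sum]
    refine Finset.sum_congr rfl fun t ht => ?_
    rw [(Finset.mem_powersetCard.1 ht).2]
  simp only [key]
  unfold lambdaSum
  rcases Nat.eq_zero_or_pos k with rfl | hk
  · simp
  · have hr : Finset.range (k + 1) = insert 0 (insert 1 (Finset.Icc 2 k)) := by
      ext j
      simp only [Finset.mem_range, Finset.mem_insert, Finset.mem_Icc]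
      omega
    rw [hr, Finset.sum_insert (by simp), Finset.sum_insert (by simp)]
    simp [Finset.powersetCard_one]
end
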